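/- Let n ≥ 2 and α ∈ (0,2). For every y in the open unit ball B ⊆ ℝⁿ and every z on the unit sphere S, the limit of g_y(x)/g_0(x) as x → z with x ∈ B ∖ {0, y} exists and equals (1−|y|²)^{α/2} |y−z|^{−n}, i.e. it equals the Martin kernel M(y,z) of the unit ball. -/

import Mathlib

open Metric Set MeasureTheory Filter

/-- `g_y(x) = |x−y|^{α−n} ∫₀^{w(x,y)} s^{α/2−1} (1+s)^{−n/2} ds` with
`w(x,y) = (1−|x|²)(1−|y|²)/|x−y|²`; up to a positive constant, the Green function of
the unit ball for the symmetric α-stable process. -/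
noncomputable def greenFn (n : ℕ) (α : ℝ) (y x : EuclideanSpace ℝ (Fin n)) : ℝ :=
  dist x y ^ (α - (n : ℝ)) *
    ∫ s in (0 : ℝ)..((1 - ‖x‖ ^ 2) * (1 - ‖y‖ ^ 2) / dist x y ^ 2),
      s ^ (α / 2 - 1) * (1 + s) ^ (-(n : ℝ) / 2)

/-!
As `x` tends to the boundary point `z`, the upper limit `w(x, y)` of the integral in `g_y(x)`
tends to `0`, and there the integral behaves like `(2 / α) w(x, y) ^ (α / 2)`, since the factor
`(1 + s) ^ (-n / 2)` is `1` at `s = 0`. The powers of `|x - y|` then combine to `|x - y| ^ (-n)`,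
so `g_y(x) ∼ (2 / α) M(y, z) (1 - |x|²) ^ (α / 2)`. The boundary decay `(1 - |x|²) ^ (α / 2)` does
not depend on `y`, hence it cancels in `g_y(x) / g_0(x)`, and `M(0, z) = 1`.
-/

open scoped Topology

section PowerWeight

variable {f : ℝ → ℝ} {a : ℝ}

lemma intervalIntegrable_rpow_mul_of_continuousOn (ha : 0 < a) (hf : ContinuousOn f (Ici 0))
    {w : ℝ} (hw : 0 ≤ w) :
    IntervalIntegrable (fun s ↦ s ^ (a - 1) * f s) volume 0 w :=
  (intervalIntegral.intervalIntegrable_rpow' (by linarith)).mul_continuousOn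
    (hf.mono (by simpa only [uIcc_of_le hw] using Icc_subset_Ici_self))

lemma tendsto_integral_rpow_mul_nhdsGT_zero (ha : 0 < a) (hf : ContinuousOn f (Ici 0)) :
    Tendsto (fun w ↦ ∫ s in (0 : ℝ)..w, s ^ (a - 1) * f s) (𝓝[>] 0) (𝓝 0) := by
  have continuousWithinAt_zero := intervalIntegral.continuousOn_primitive_interval'
    (intervalIntegrable_rpow_mul_of_continuousOn ha hf zero_le_one) left_mem_uIcc 0 left_mem_uIcc
  rw [uIcc_of_le zero_le_one] at continuousWithinAt_zero
  simpa only [intervalIntegral.integral_same] using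
    continuousWithinAt_zero.tendsto.mono_left (nhdsWithin_le_of_mem (Icc_mem_nhdsGT one_pos))

lemma hasDerivAt_integral_rpow_mul (ha : 0 < a) (hf : ContinuousOn f (Ici 0))
    {w : ℝ} (hw : 0 < w) :
    HasDerivAt (fun w ↦ ∫ s in (0 : ℝ)..w, s ^ (a - 1) * f s) (w ^ (a - 1) * f w) w := by
  have continuousOn_integrand : ContinuousOn (fun s ↦ s ^ (a - 1) * f s) (Ioi 0) :=
    (continuousOn_id.rpow_const fun s hs ↦ .inl hs.ne').mul (hf.mono Ioi_subset_Ici_self)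
  exact intervalIntegral.integral_hasDerivAt_right
    (intervalIntegrable_rpow_mul_of_continuousOn ha hf hw.le)
    (continuousOn_integrand.stronglyMeasurableAtFilter isOpen_Ioi w hw)
    (continuousOn_integrand.continuousAt (Ioi_mem_nhds hw))

-- L'Hôpital's rule: the derivatives of numerator and denominator have quotient `f w / a`.
lemma tendsto_integral_rpow_mul_div_rpow (ha : 0 < a) (hf : ContinuousOn f (Ici 0)) :
    Tendsto (fun w ↦ (∫ s in (0 : ℝ)..w, s ^ (a - 1) * f s) / w ^ a) (𝓝[>] 0)
      (𝓝 (f 0 / a)) := by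
  have tendsto_rpow : Tendsto (fun w : ℝ ↦ w ^ a) (𝓝[>] 0) (𝓝 0) := by
    simpa only [Real.zero_rpow ha.ne'] using
      (Real.continuousAt_rpow_const 0 a (.inr ha.le)).tendsto.mono_left nhdsWithin_le_nhds
  have tendsto_profile : Tendsto f (𝓝[>] 0) (𝓝 (f 0)) :=
    (hf 0 self_mem_Ici).tendsto.mono_left (nhdsWithin_mono 0 Ioi_subset_Ici_self)
  refine HasDerivAt.lhopital_zero_nhdsGT (f' := fun w ↦ w ^ (a - 1) * f w)
    (g' := fun w ↦ a * w ^ (a - 1)) ?_ ?_ ?_ (tendsto_integral_rpow_mul_nhdsGT_zero ha hf)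
    tendsto_rpow ((tendsto_profile.div_const a).congr' ?_)
  all_goals filter_upwards [self_mem_nhdsWithin] with w (hw : 0 < w)
  · exact hasDerivAt_integral_rpow_mul ha hf hw
  · exact Real.hasDerivAt_rpow_const (.inl hw.ne')
  · positivity
  · field_simp

end PowerWeight

section UnitBall

variable {E : Type*} [SeminormedAddCommGroup E]

/-- The quantity `w(x, y) = (1 - |x|²)(1 - |y|²) / |x - y|²` of a pair of points in the unit ball,
the upper limit of the integral in the Green function. -/
noncomputable def ballRatio (x y : E) : ℝ :=
  (1 - ‖x‖ ^ 2) * (1 - ‖y‖ ^ 2) / dist x y ^ 2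

/-- The function `g_y(x)` of the unit ball of any seminormed group, where the real parameter `ν`
takes the place of the dimension. -/
noncomputable def ballGreen (ν α : ℝ) (y x : E) : ℝ :=
  dist x y ^ (α - ν) * ∫ s in (0 : ℝ)..ballRatio x y, s ^ (α / 2 - 1) * (1 + s) ^ (-ν / 2)

/-- The Martin kernel `M(y, z)` of the unit ball, normalized at the origin, where the real
parameter `ν` takes the place of the dimension. -/
noncomputable def martinKernel (ν α : ℝ) (y z : E) : ℝ :=
  (1 - ‖y‖ ^ 2) ^ (α / 2) * dist y z ^ (-ν)

variable {x y z : E} {ν α : ℝ}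

lemma one_sub_norm_sq_pos (hx : ‖x‖ < 1) : 0 < 1 - ‖x‖ ^ 2 :=
  sub_pos.2 (pow_lt_one₀ (norm_nonneg x) hx two_ne_zero)

lemma dist_pos_of_norm_lt_norm (h : ‖y‖ < ‖x‖) : 0 < dist x y :=
  (sub_pos.2 h).trans_le ((norm_sub_norm_le x y).trans_eq (dist_eq_norm x y).symm)

lemma martinKernel_zero_left (hz : ‖z‖ = 1) : martinKernel ν α 0 z = 1 := by
  simp [martinKernel, hz]

lemma eventually_norm_lt_one_and_dist_pos (hy : ‖y‖ < 1) (hz : ‖z‖ = 1) :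
    ∀ᶠ x in 𝓝[ball 0 1] z, ‖x‖ < 1 ∧ 0 < dist x y := by
  have norm_gt : ∀ᶠ x in 𝓝 z, ‖y‖ < ‖x‖ :=
    continuous_norm.continuousAt.eventually_const_lt (hy.trans_eq hz.symm)
  filter_upwards [self_mem_nhdsWithin, nhdsWithin_le_nhds norm_gt] with x hx hyx
  exact ⟨mem_ball_zero_iff.1 hx, dist_pos_of_norm_lt_norm hyx⟩

lemma tendsto_ballRatio_nhdsGT_zero (hy : ‖y‖ < 1) (hz : ‖z‖ = 1) :
    Tendsto (fun x ↦ ballRatio x y) (𝓝[ball 0 1] z) (𝓝[>] 0) := by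
  have dist_zy_pos : 0 < dist z y := dist_pos_of_norm_lt_norm (hz ▸ hy)
  have continuousAt_ratio : ContinuousAt (fun x ↦ ballRatio x y) z :=
    ContinuousAt.div (by fun_prop) (by fun_prop) (pow_ne_zero 2 dist_zy_pos.ne')
  have ratio_eq_zero : ballRatio z y = 0 := by simp [ballRatio, hz]
  refine tendsto_nhdsWithin_iff.2
    ⟨(ratio_eq_zero ▸ continuousAt_ratio.tendsto).mono_left nhdsWithin_le_nhds, ?_⟩
  filter_upwards [eventually_norm_lt_one_and_dist_pos hy hz] with x ⟨hx, hxy⟩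
  exact div_pos (mul_pos (one_sub_norm_sq_pos hx) (one_sub_norm_sq_pos hy)) (pow_pos hxy 2)

lemma ballRatio_rpow_half (hx : ‖x‖ < 1) (hy : ‖y‖ < 1) :
    ballRatio x y ^ (α / 2) =
      (1 - ‖x‖ ^ 2) ^ (α / 2) * (1 - ‖y‖ ^ 2) ^ (α / 2) / dist x y ^ α := by
  have hx' := (one_sub_norm_sq_pos hx).le
  have hy' := (one_sub_norm_sq_pos hy).le
  have dist_sq_rpow : (dist x y ^ 2) ^ (α / 2) = dist x y ^ α := by
    rw [← Real.rpow_natCast_mul dist_nonneg, Nat.cast_ofNat, mul_div_cancel₀ α two_ne_zero]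
  rw [ballRatio, Real.div_rpow (mul_nonneg hx' hy') (sq_nonneg _), Real.mul_rpow hx' hy',
    dist_sq_rpow]

lemma ballGreen_div_rpow (hx : ‖x‖ < 1) (hy : ‖y‖ < 1) (hxy : 0 < dist x y) :
    ballGreen ν α y x / (1 - ‖x‖ ^ 2) ^ (α / 2) =
      martinKernel ν α y x *
        ((∫ s in (0 : ℝ)..ballRatio x y, s ^ (α / 2 - 1) * (1 + s) ^ (-ν / 2)) /
          ballRatio x y ^ (α / 2)) := by
  have hx_rpow := Real.rpow_pos_of_pos (one_sub_norm_sq_pos hx) (α / 2)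
  have hy_rpow := Real.rpow_pos_of_pos (one_sub_norm_sq_pos hy) (α / 2)
  rw [ballGreen, martinKernel, ballRatio_rpow_half hx hy, dist_comm y x, sub_eq_add_neg α ν,
    Real.rpow_add hxy]
  field_simp

lemma tendsto_ballGreen_div_rpow (hα : 0 < α) (hy : ‖y‖ < 1) (hz : ‖z‖ = 1) :
    Tendsto (fun x ↦ ballGreen ν α y x / (1 - ‖x‖ ^ 2) ^ (α / 2)) (𝓝[ball 0 1] z)
      (𝓝 (martinKernel ν α y z * (2 / α))) := by
  have dist_ne_zero : dist y z ≠ 0 :=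
    (dist_comm y z).trans_ne (dist_pos_of_norm_lt_norm (hz ▸ hy)).ne'
  have tendsto_kernel : Tendsto (martinKernel ν α y) (𝓝[ball 0 1] z) (𝓝 (martinKernel ν α y z)) :=
    (continuousAt_const.mul (ContinuousAt.rpow_const (by fun_prop)
      (.inl dist_ne_zero))).tendsto.mono_left nhdsWithin_le_nhds
  have continuousOn_profile : ContinuousOn (fun s : ℝ ↦ (1 + s) ^ (-ν / 2)) (Ici 0) :=
    ContinuousOn.rpow_const (by fun_prop) fun s (hs : 0 ≤ s) ↦ .inl (by positivity)
  have tendsto_integral :=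
    (tendsto_integral_rpow_mul_div_rpow (half_pos hα) continuousOn_profile).comp
      (tendsto_ballRatio_nhdsGT_zero hy hz)
  rw [add_zero, Real.one_rpow, one_div_div] at tendsto_integral
  refine (tendsto_kernel.mul tendsto_integral).congr' ?_
  filter_upwards [eventually_norm_lt_one_and_dist_pos hy hz] with x ⟨hx, hxy⟩
  exact (ballGreen_div_rpow hx hy hxy).symm

theorem stmt18_general (hα : 0 < α) (hy : ‖y‖ < 1) (hz : ‖z‖ = 1) :
    Tendsto (fun x ↦ ballGreen ν α y x / ballGreen ν α 0 x) (𝓝[ball 0 1] z)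
      (𝓝 (martinKernel ν α y z)) := by
  have tendsto_numerator := tendsto_ballGreen_div_rpow (ν := ν) hα hy hz
  have tendsto_denominator := tendsto_ballGreen_div_rpow (ν := ν) hα (norm_zero.trans_lt one_pos) hz
  have two_div_ne_zero : 2 / α ≠ 0 := by positivity
  rw [martinKernel_zero_left hz, one_mul] at tendsto_denominator
  have tendsto_quotient := tendsto_numerator.div tendsto_denominator two_div_ne_zero
  rw [mul_div_cancel_right₀ _ two_div_ne_zero] at tendsto_quotient
  refine tendsto_quotient.congr' ?_
  filter_upwards [self_mem_nhdsWithin] with x hx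
  have decay_pos := Real.rpow_pos_of_pos (one_sub_norm_sq_pos (mem_ball_zero_iff.1 hx)) (α / 2)
  exact div_div_div_cancel_right₀ decay_pos.ne' _ _

end UnitBall

/-- for every `y` in the open unit ball `B` and every `z` on the unit
sphere, `g_y(x)/g_0(x) → (1−|y|²)^{α/2} |y−z|^{−n} = M(y,z)` as `x → z` with
`x ∈ B ∖ {0, y}`. -/
theorem stmt18 (n : ℕ) (hn : 2 ≤ n) (α : ℝ) (hα : α ∈ Set.Ioo (0 : ℝ) 2)
    (y : EuclideanSpace ℝ (Fin n)) (hy : y ∈ ball (0 : EuclideanSpace ℝ (Fin n)) 1)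
    (z : EuclideanSpace ℝ (Fin n)) (hz : z ∈ sphere (0 : EuclideanSpace ℝ (Fin n)) 1) :
    Tendsto (fun x => greenFn n α y x / greenFn n α 0 x)
      (nhdsWithin z (ball (0 : EuclideanSpace ℝ (Fin n)) 1 \ {0, y}))
      (nhds ((1 - ‖y‖ ^ 2) ^ (α / 2) * dist y z ^ (-(n : ℝ)))) :=
  (stmt18_general hα.1 (mem_ball_zero_iff.1 hy) (mem_sphere_zero_iff_norm.1 hz)).mono_left
    (nhdsWithin_mono z sdiff_subset)
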